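/- arXiv:2508.18402 — 4 statements merged into one kernel-verified Lean document; each statement's English description precedes it below -/
import Mathlib

section
/- Let η ∈ {1,2} and let q, r, s be primes with q ≡ 3 (mod 4), r ≡ s ≡ 5 (mod 8), Legendre symbols (q/r) = (q/s) = (−1)^{δ_{η,2}} and (r/s) = 1, and let (γ, γ′) be the fundamental solution of X² − ηqrs·Y² = 1. Then exactly one of the three natural numbers 2^{δ_{η,1}}·q·(γ−1), 2r·(γ+(−1)^{δ_{η,2}}), and 2s·(γ+(−1)^{δ_{η,2}}) is a perfect square. -/
lemma aux_split {m n D k : ℕ} (hc : Nat.Coprime m n) (hD : D ≠ 0) (h : m * n = D * k ^ 2) :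
    ∃ d e a b : ℕ, d * e = D ∧ m = d * a ^ 2 ∧ n = e * b ^ 2 := by
  have h1 : Nat.gcd D m * Nat.gcd D n = D := by
    rw [← Nat.Coprime.gcd_mul D hc, h]
    exact Nat.gcd_eq_left (Dvd.intro _ rfl)
  obtain ⟨x, hx⟩ := Nat.gcd_dvd_right D m
  obtain ⟨y, hy⟩ := Nat.gcd_dvd_right D n
  have hxy : x * y = k ^ 2 := by
    apply Nat.eq_of_mul_eq_mul_left (Nat.pos_of_ne_zero hD)
    rw [← h]
    conv_lhs => rw [← h1]
    conv_rhs => rw [hx, hy]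
    ring
  have hcxy : Nat.Coprime x y :=
    Nat.Coprime.coprime_dvd_left (Dvd.intro_left _ hx.symm)
      (Nat.Coprime.coprime_dvd_right (Dvd.intro_left _ hy.symm) hc)
  have hu : IsUnit (gcd x y) := by
    rw [Nat.isUnit_iff]; exact hcxy
  have hu' : IsUnit (gcd y x) := by
    rw [Nat.isUnit_iff]; exact hcxy.symm
  obtain ⟨a, ha⟩ := exists_eq_pow_of_mul_eq_pow hu hxy
  obtain ⟨b, hb⟩ := exists_eq_pow_of_mul_eq_pow hu' (by rw [mul_comm]; exact hxy)
  exact ⟨_, _, a, b, h1, by rw [← ha]; exact hx, by rw [← hb]; exact hy⟩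

lemma aux_peel {p d e E : ℕ} (hp : p.Prime) (h : d * e = p * E) :
    (∃ x, d = p * x ∧ x * e = E) ∨ (∃ x, e = p * x ∧ d * x = E) := by
  rcases (hp.dvd_mul).1 (Dvd.intro _ h.symm) with ⟨x, hx⟩ | ⟨x, hx⟩
  · left
    refine ⟨x, hx, Nat.eq_of_mul_eq_mul_left hp.pos ?_⟩
    rw [← h, hx]; ring
  · right
    refine ⟨x, hx, Nat.eq_of_mul_eq_mul_left hp.pos ?_⟩
    rw [← h, hx]; ring

lemma aux_leg (p : ℕ) [Fact p.Prime] {d e a b v : ℤ} (h : d * a ^ 2 - e * b ^ 2 = v)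
    (he : (p : ℤ) ∣ e) (hv : legendreSym p v ≠ 0) : legendreSym p d = legendreSym p v := by
  have h1 : ((v : ℤ) : ZMod p) = ((d * a ^ 2 : ℤ) : ZMod p) := by
    have : ((e : ℤ) : ZMod p) = 0 := (ZMod.intCast_zmod_eq_zero_iff_dvd e p).2 he
    rw [← h]; push_cast; rw [this]; ring
  have h2 : legendreSym p v = legendreSym p (d * a ^ 2) := by
    unfold legendreSym; rw [h1]
  have h3 : ((a : ℤ) : ZMod p) ≠ 0 := by
    intro h0
    apply hv
    rw [legendreSym.eq_zero_iff, h1]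
    push_cast; rw [h0]; ring
  rw [h2, legendreSym.mul, legendreSym.sq_one' p h3, mul_one]

lemma aux_sq {p : ℕ} (hp : p.Prime) {e z w : ℤ} (he : ¬ (p : ℤ) ∣ e) (hz : z ≠ 0)
    (h : p * e * z ^ 2 = w ^ 2) : False := by
  have hp' : Prime (p : ℤ) := Nat.prime_iff_prime_int.1 hp
  have h1 : z ∣ w := (Int.pow_dvd_pow_iff two_ne_zero).1 (Dvd.intro_left _ h)
  obtain ⟨c, rfl⟩ := h1
  have h2 : p * e = c ^ 2 := by
    have : z ^ 2 ≠ 0 := pow_ne_zero _ hz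
    apply mul_right_cancel₀ this
    rw [h]; ring
  obtain ⟨x, rfl⟩ := hp'.dvd_of_dvd_pow (Dvd.intro _ h2)
  apply he
  refine ⟨x ^ 2, mul_left_cancel₀ hp'.ne_zero ?_⟩
  rw [h2]; ring

lemma aux_min {γ D a b : ℤ} (hγ : 1 < γ)
    (hfund : ∀ a b : ℤ, 0 < a → 0 < b → a ^ 2 - D * b ^ 2 = 1 → γ ≤ a)
    (ha : γ + 1 = 2 * a ^ 2) (hb : a ^ 2 - D * b ^ 2 = 1) : False := by
  have h1 : a ≠ 0 := by rintro rfl; nlinarith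
  have h2 : b ≠ 0 := by rintro rfl; nlinarith
  have := hfund |a| |b| (abs_pos.2 h1) (abs_pos.2 h2) (by rw [sq_abs, sq_abs]; exact hb)
  have h3 := sq_abs a
  nlinarith

lemma aux_mod4 {d e a b : ℤ} (hd : d % 4 = 3) (he : e % 4 = 1) (h : d * a ^ 2 - e * b ^ 2 = 1) :
    False := by
  have h1 : (d : ZMod 4) = 3 := by
    have := (ZMod.intCast_eq_intCast_iff d 3 4).2 hd
    simpa using this
  have h2 : (e : ZMod 4) = 1 := by
    have := (ZMod.intCast_eq_intCast_iff e 1 4).2 he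
    simpa using this
  have h3 := congrArg (Int.cast : ℤ → ZMod 4) h
  push_cast at h3
  rw [h1, h2] at h3
  generalize (a : ZMod 4) = x at h3
  generalize (b : ZMod 4) = y at h3
  revert x y; decide

lemma aux_mod8 {d e a b : ℤ} (hd : d % 8 = 6 ∧ e % 8 = 1 ∨ d % 8 = 5 ∧ e % 8 = 6)
    (h : d * a ^ 2 - e * b ^ 2 = 1) : False := by
  have key : ∀ u v : ℤ, d % 8 = u % 8 → e % 8 = v % 8 →
      (u : ZMod 8) * (a : ZMod 8) ^ 2 - (v : ZMod 8) * (b : ZMod 8) ^ 2 = 1 := by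
    intro u v hu hv
    have h1 := (ZMod.intCast_eq_intCast_iff d u 8).2 hu
    have h2 := (ZMod.intCast_eq_intCast_iff e v 8).2 hv
    have h3 := congrArg (Int.cast : ℤ → ZMod 8) h
    push_cast at h3
    rw [← h1, ← h2]; exact h3
  rcases hd with ⟨h1, h2⟩ | ⟨h1, h2⟩
  · have h3 := key 6 1 h1 h2
    generalize (a : ZMod 8) = x at h3
    generalize (b : ZMod 8) = y at h3
    push_cast at h3
    revert x y; decide
  · have h3 := key 5 6 h1 h2
    generalize (a : ZMod 8) = x at h3
    generalize (b : ZMod 8) = y at h3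
    push_cast at h3
    revert x y; decide

lemma aux_two (p : ℕ) [Fact p.Prime] (h : p % 8 = 5) : legendreSym p 2 = -1 := by
  rw [legendreSym.at_two (by rintro rfl; omega), ZMod.χ₈_nat_eq_if_mod_eight]
  simp [h]; omega

lemma aux_neg (p : ℕ) [Fact p.Prime] (h : p % 8 = 5) : legendreSym p (-1) = 1 := by
  rw [legendreSym.at_neg_one (by rintro rfl; omega), ZMod.χ₄_nat_eq_if_mod_four]
  have : p % 4 = 1 := by omega
  simp [this]; omega

lemma aux_neg' (p : ℕ) [Fact p.Prime] (h : p % 8 = 5) (x : ℤ) :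
    legendreSym p (-x) = legendreSym p x := by
  rw [← neg_one_mul, legendreSym.mul, aux_neg p h, one_mul]

/-- the parity decomposition for odd `γ` -/
lemma aux_odd {γ γ' : ℤ} {D : ℕ} (hD : D ≠ 0) (hγ : 1 < γ) (ho : γ % 2 = 1)
    (hg : γ' % 2 = 0) (h : γ ^ 2 - D * γ' ^ 2 = 1) :
    ∃ d e a b : ℕ, d * e = D ∧ γ + 1 = 2 * (d * a ^ 2 : ℤ) ∧ γ - 1 = 2 * (e * b ^ 2 : ℤ) ∧
      (d * a ^ 2 - e * b ^ 2 : ℤ) = 1 := by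
  obtain ⟨n, hn⟩ : ∃ n : ℕ, γ = 2 * n + 1 := ⟨(γ / 2).toNat, by omega⟩
  obtain ⟨k, hk⟩ : ∃ k : ℤ, γ' = 2 * k := ⟨γ' / 2, by omega⟩
  have h1 : (n + 1) * n = D * k.natAbs ^ 2 := by
    zify
    rw [sq_abs]
    subst hn hk
    linarith
  obtain ⟨d, e, a, b, h2, h3, h4⟩ := aux_split (by simp) hD h1
  zify at h3 h4
  exact ⟨d, e, a, b, h2, by rw [← h3, hn]; ring, by rw [← h4, hn]; ring, by rw [← h3, ← h4]; ring⟩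

lemma aux_even {γ γ' : ℤ} {D : ℕ} (hD : D ≠ 0) (hγ : 1 < γ) (ho : γ % 2 = 0)
    (h : γ ^ 2 - D * γ' ^ 2 = 1) :
    ∃ d e a b : ℕ, d * e = D ∧ (d * a ^ 2 - e * b ^ 2 : ℤ) = 2 := by
  obtain ⟨n, hn⟩ : ∃ n : ℕ, γ = 2 * n + 2 := ⟨(γ / 2 - 1).toNat, by omega⟩
  have h1 : (2 * n + 3) * (2 * n + 1) = D * γ'.natAbs ^ 2 := by
    zify
    rw [sq_abs]
    subst hn
    linarith
  have hc : Nat.Coprime (2 * n + 3) (2 * n + 1) := by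
    have : 2 * n + 3 = 2 + (2 * n + 1) := by ring
    rw [this, Nat.coprime_add_self_left]
    simp
  obtain ⟨d, e, a, b, h2, h3, h4⟩ := aux_split hc hD h1
  zify at h3 h4
  exact ⟨d, e, a, b, h2, by rw [← h3, ← h4]; ring⟩

set_option maxHeartbeats 1000000 in
lemma case_one (q r s : ℕ) [Fact q.Prime] [Fact r.Prime] [Fact s.Prime]
    (hq4 : q % 4 = 3) (hr8 : r % 8 = 5) (hs8 : s % 8 = 5)
    (hqr : legendreSym r q = 1)
    (hqs : legendreSym s q = 1)
    (hrs : legendreSym s r = 1)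
    (γ γ' : ℤ) (hγ : 0 < γ) (hγ' : 0 < γ')
    (hPell : γ ^ 2 - (q * r * s : ℕ) * γ' ^ 2 = 1)
    (hfund : ∀ a b : ℤ, 0 < a → 0 < b → a ^ 2 - (q * r * s : ℕ) * b ^ 2 = 1 → γ ≤ a) :
    ((∃ t : ℤ, 2 * (q : ℤ) * (γ - 1) = t ^ 2) ∨ (∃ t : ℤ, 2 * (r : ℤ) * (γ + 1) = t ^ 2) ∨ (∃ t : ℤ, 2 * (s : ℤ) * (γ + 1) = t ^ 2)) ∧
    ¬ ((∃ t : ℤ, 2 * (q : ℤ) * (γ - 1) = t ^ 2) ∧ (∃ t : ℤ, 2 * (r : ℤ) * (γ + 1) = t ^ 2)) ∧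
    ¬ ((∃ t : ℤ, 2 * (q : ℤ) * (γ - 1) = t ^ 2) ∧ (∃ t : ℤ, 2 * (s : ℤ) * (γ + 1) = t ^ 2)) ∧
    ¬ ((∃ t : ℤ, 2 * (r : ℤ) * (γ + 1) = t ^ 2) ∧ (∃ t : ℤ, 2 * (s : ℤ) * (γ + 1) = t ^ 2)) := by
  have hq := (Fact.out : q.Prime)
  have hr := (Fact.out : r.Prime)
  have hs := (Fact.out : s.Prime)
  have hsr : legendreSym r s = 1 := by
    rw [← hrs]
    exact legendreSym.quadratic_reciprocity_one_mod_four (by omega) (by rintro rfl; omega)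
  have hne : r ≠ s := by
    rintro rfl
    rw [(legendreSym.eq_zero_iff r r).2 (by simp)] at hrs
    omega
  have hqr' : q ≠ r := by rintro rfl; omega
  have hqs' : q ≠ s := by rintro rfl; omega
  have h2r := aux_two r hr8
  have h2s := aux_two s hs8
  have h1r : legendreSym r 1 = 1 := legendreSym.at_one r
  have h1s : legendreSym s 1 = 1 := legendreSym.at_one s
  have hnd : ∀ {x y : ℕ}, x.Prime → y.Prime → x ≠ y → ¬ (x : ℤ) ∣ y := by
    intro x y hx hy hxy h
    exact hxy ((Nat.prime_dvd_prime_iff_eq hx hy).1 (Int.natCast_dvd_natCast.1 h))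
  have hnd1 : ∀ {x : ℕ}, x.Prime → ¬ (x : ℤ) ∣ 1 := by
    intro x hx h
    exact hx.one_lt.ne' (by exact_mod_cast Int.eq_one_of_dvd_one (by positivity) h)
  have hD : q * r * s ≠ 0 := by
    have := hq.ne_zero
    have := hr.ne_zero
    have := hs.ne_zero
    positivity
  have hq0 : (q : ℤ) ≠ 0 := by exact_mod_cast hq.ne_zero
  have hr0 : (r : ℤ) ≠ 0 := by exact_mod_cast hr.ne_zero
  have hs0 : (s : ℤ) ≠ 0 := by exact_mod_cast hs.ne_zero
  have hγ1 : 1 < γ := by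
    by_contra hc
    have : γ = 1 := by omega
    subst this
    have : ((q * r * s : ℕ) : ℤ) * γ' ^ 2 = 0 := by linarith
    rcases mul_eq_zero.1 this with h | h
    · exact hD (by exact_mod_cast h)
    · exact (pow_ne_zero 2 hγ'.ne') h
  have hq4' : (q : ℤ) % 4 = 3 := by omega
  have hr8' : (r : ℤ) % 8 = 5 := by omega
  have hs8' : (s : ℤ) % 8 = 5 := by omega
  refine ⟨?_, ?_, ?_, ?_⟩
  · rcases Int.emod_two_eq_zero_or_one γ with ho | ho
    · exfalso
      obtain ⟨d, e, a, b, hde, hv⟩ := aux_even hD hγ1 ho hPell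
      have hv' : (-e : ℤ) * b ^ 2 - (-d : ℤ) * a ^ 2 = 2 := by rw [← hv]; ring
      rw [show q * r * s = r * (q * (s * 1)) by ring] at hde
      have hn2 : legendreSym r 2 ≠ 0 := by rw [h2r]; norm_num
      rcases aux_peel hr hde with ⟨x, rfl, h1⟩ | ⟨x, rfl, h1⟩
      · have := aux_leg r hv' (by simp) hn2
        rw [aux_neg' r hr8, h2r] at this
        rcases aux_peel hq h1 with ⟨y, rfl, khq⟩ | ⟨y, rfl, khq⟩ <;>
        rcases aux_peel hs khq with ⟨z, rfl, kz⟩ | ⟨z, rfl, kz⟩ <;>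
        obtain ⟨rfl, rfl⟩ := mul_eq_one.1 kz <;>
        simp [legendreSym.mul, hqr, hsr] at this
      · have := aux_leg r hv (by simp) hn2
        rw [h2r] at this
        rcases aux_peel hq h1 with ⟨y, rfl, khq⟩ | ⟨y, rfl, khq⟩ <;>
        rcases aux_peel hs khq with ⟨z, rfl, kz⟩ | ⟨z, rfl, kz⟩ <;>
        obtain ⟨rfl, rfl⟩ := mul_eq_one.1 kz <;>
        simp [legendreSym.mul, hqr, hsr] at this
    · have hg : γ' % 2 = 0 := by
        rcases Int.emod_two_eq_zero_or_one γ' with h | h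
        · exact h
        · exfalso
          have e1 : γ ^ 2 % 2 = 1 := by rw [pow_two, Int.mul_emod, ho]; rfl
          have e2 : γ' ^ 2 % 2 = 1 := by rw [pow_two, Int.mul_emod, h]; rfl
          have e3 : (q * r * s : ℤ) % 2 = 1 := by
            rw [Int.mul_emod, Int.mul_emod (q : ℤ), show (q : ℤ) % 2 = 1 by omega,
              show (r : ℤ) % 2 = 1 by omega, show (s : ℤ) % 2 = 1 by omega]; rfl
          have e4 : (q * r * s * γ' ^ 2 : ℤ) % 2 = 1 := by rw [Int.mul_emod, e3, e2]; rfl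
          push_cast at hPell
          omega
      obtain ⟨d, e, a, b, hde, hp, hm, hv⟩ := aux_odd hD hγ1 ho hg hPell
      have h3 : ∀ u v : ℤ, u % 4 = 3 → v % 4 = 1 → (u * v) % 4 = 3 := by
        intro u v hu hv
        rw [Int.mul_emod, hu, hv]; rfl
      have h1 : ∀ u v : ℤ, u % 4 = 1 → v % 4 = 1 → (u * v) % 4 = 1 := by
        intro u v hu hv
        rw [Int.mul_emod, hu, hv]; rfl
      have hr4 : (r : ℤ) % 4 = 1 := by omega
      have hs4 : (s : ℤ) % 4 = 1 := by omega
      have h14 : (1 : ℤ) % 4 = 1 := rfl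
      have hde0 := hde
      rw [show q * r * s = q * (r * (s * 1)) by ring] at hde
      rcases aux_peel hq hde with ⟨x, rfl, h4⟩ | ⟨x, rfl, h4⟩
      · exfalso
        rcases aux_peel hr h4 with ⟨y, rfl, khr⟩ | ⟨y, rfl, khr⟩ <;>
        rcases aux_peel hs khr with ⟨z, rfl, kz⟩ | ⟨z, rfl, kz⟩ <;>
        obtain ⟨rfl, rfl⟩ := mul_eq_one.1 kz <;>
        refine aux_mod4 ?_ ?_ hv <;> push_cast <;>
        first
        | exact h14
        | exact h3 _ _ hq4' (by first | exact h14 | exact h1 _ _ hr4 (h1 _ _ hs4 h14) | exact h1 _ _ hr4 h14 | exact h1 _ _ hs4 h14)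
        | exact h1 _ _ hr4 (h1 _ _ hs4 h14)
        | exact h1 _ _ hr4 h14
        | exact h1 _ _ hs4 h14
      · rcases aux_peel hr h4 with ⟨y, rfl, khr⟩ | ⟨y, rfl, khr⟩ <;>
        rcases aux_peel hs khr with ⟨z, rfl, kz⟩ | ⟨z, rfl, kz⟩ <;>
        obtain ⟨rfl, rfl⟩ := mul_eq_one.1 kz <;> push_cast at hp hm hv
        · left
          exact ⟨2 * q * b, by rw [hm]; ring⟩
        · right; left
          exact ⟨2 * r * a, by rw [hp]; ring⟩
        · right; right
          exact ⟨2 * s * a, by rw [hp]; ring⟩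
        · exfalso
          refine aux_min (a := a) (b := b) hγ1 hfund ?_ ?_
          · rw [hp]; ring
          · rw [← hv]; push_cast; ring
  · rintro ⟨⟨t, ht⟩, ⟨u, hu⟩⟩
    refine aux_sq hs (e := 1) (z := 2 * q * r * γ') (w := t * u) (hnd1 hs) (by positivity) ?_
    rw [mul_pow t, ← ht, ← hu]
    push_cast at hPell
    linear_combination (-4 * q * r : ℤ) * hPell
  · rintro ⟨⟨t, ht⟩, ⟨u, hu⟩⟩
    refine aux_sq hr (e := 1) (z := 2 * q * s * γ') (w := t * u) (hnd1 hr) (by positivity) ?_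
    rw [mul_pow t, ← ht, ← hu]
    push_cast at hPell
    linear_combination (-4 * q * s : ℤ) * hPell
  · rintro ⟨⟨t, ht⟩, ⟨u, hu⟩⟩
    refine aux_sq hr (e := s) (z := 2 * (γ + 1)) (w := t * u) (hnd hr hs hne) (by positivity) ?_
    rw [mul_pow t, ← ht, ← hu]
    ring

set_option maxHeartbeats 1000000 in
lemma case_two (q r s : ℕ) [Fact q.Prime] [Fact r.Prime] [Fact s.Prime]
    (hq4 : q % 4 = 3) (hr8 : r % 8 = 5) (hs8 : s % 8 = 5)
    (hqr : legendreSym r q = -1)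
    (hqs : legendreSym s q = -1)
    (hrs : legendreSym s r = 1)
    (γ γ' : ℤ) (hγ : 0 < γ) (hγ' : 0 < γ')
    (hPell : γ ^ 2 - (2 * q * r * s : ℕ) * γ' ^ 2 = 1)
    (hfund : ∀ a b : ℤ, 0 < a → 0 < b → a ^ 2 - (2 * q * r * s : ℕ) * b ^ 2 = 1 → γ ≤ a) :
    ((∃ t : ℤ, (q : ℤ) * (γ - 1) = t ^ 2) ∨ (∃ t : ℤ, 2 * (r : ℤ) * (γ - 1) = t ^ 2) ∨ (∃ t : ℤ, 2 * (s : ℤ) * (γ - 1) = t ^ 2)) ∧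
    ¬ ((∃ t : ℤ, (q : ℤ) * (γ - 1) = t ^ 2) ∧ (∃ t : ℤ, 2 * (r : ℤ) * (γ - 1) = t ^ 2)) ∧
    ¬ ((∃ t : ℤ, (q : ℤ) * (γ - 1) = t ^ 2) ∧ (∃ t : ℤ, 2 * (s : ℤ) * (γ - 1) = t ^ 2)) ∧
    ¬ ((∃ t : ℤ, 2 * (r : ℤ) * (γ - 1) = t ^ 2) ∧ (∃ t : ℤ, 2 * (s : ℤ) * (γ - 1) = t ^ 2)) := by
  have hq := (Fact.out : q.Prime)
  have hr := (Fact.out : r.Prime)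
  have hs := (Fact.out : s.Prime)
  have hsr : legendreSym r s = 1 := by
    rw [← hrs]
    exact legendreSym.quadratic_reciprocity_one_mod_four (by omega) (by rintro rfl; omega)
  have hne : r ≠ s := by
    rintro rfl
    rw [(legendreSym.eq_zero_iff r r).2 (by simp)] at hrs
    omega
  have hqr' : q ≠ r := by rintro rfl; omega
  have hqs' : q ≠ s := by rintro rfl; omega
  have h2r := aux_two r hr8
  have h2s := aux_two s hs8
  have h1r : legendreSym r 1 = 1 := legendreSym.at_one r
  have h1s : legendreSym s 1 = 1 := legendreSym.at_one s
  have hnd : ∀ {x y : ℕ}, x.Prime → y.Prime → x ≠ y → ¬ (x : ℤ) ∣ y := by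
    intro x y hx hy hxy h
    exact hxy ((Nat.prime_dvd_prime_iff_eq hx hy).1 (Int.natCast_dvd_natCast.1 h))
  have hnd1 : ∀ {x : ℕ}, x.Prime → ¬ (x : ℤ) ∣ 1 := by
    intro x hx h
    exact hx.one_lt.ne' (by exact_mod_cast Int.eq_one_of_dvd_one (by positivity) h)
  have hD : 2 * q * r * s ≠ 0 := by
    have := hq.ne_zero
    have := hr.ne_zero
    have := hs.ne_zero
    positivity
  have hq0 : (q : ℤ) ≠ 0 := by exact_mod_cast hq.ne_zero
  have hr0 : (r : ℤ) ≠ 0 := by exact_mod_cast hr.ne_zero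
  have hs0 : (s : ℤ) ≠ 0 := by exact_mod_cast hs.ne_zero
  have hγ1 : 1 < γ := by
    by_contra hc
    have : γ = 1 := by omega
    subst this
    have : ((2 * q * r * s : ℕ) : ℤ) * γ' ^ 2 = 0 := by linarith
    rcases mul_eq_zero.1 this with h | h
    · exact hD (by exact_mod_cast h)
    · exact (pow_ne_zero 2 hγ'.ne') h
  have hq4' : (q : ℤ) % 4 = 3 := by omega
  have hr8' : (r : ℤ) % 8 = 5 := by omega
  have hs8' : (s : ℤ) % 8 = 5 := by omega
  have hγm : γ - 1 ≠ 0 := by omega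
  refine ⟨?_, ?_, ?_, ?_⟩
  · have ho : γ % 2 = 1 := by
      rcases Int.emod_two_eq_zero_or_one γ with h | h
      · exfalso
        have e1 : γ ^ 2 % 2 = 0 := by rw [pow_two, Int.mul_emod, h]; rfl
        have e2 : γ ^ 2 = 2 * (q * r * s * γ' ^ 2) + 1 := by push_cast at hPell; linarith
        omega
      · exact h
    have hg : γ' % 2 = 0 := by
      rcases Int.emod_two_eq_zero_or_one γ' with h | h
      · exact h
      · exfalso
        have e2 : γ' ^ 2 % 2 = 1 := by rw [pow_two, Int.mul_emod, h]; rfl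
        have e3 : (q * r * s : ℤ) % 2 = 1 := by
          rw [Int.mul_emod, Int.mul_emod (q : ℤ), show (q : ℤ) % 2 = 1 by omega,
            show (r : ℤ) % 2 = 1 by omega, show (s : ℤ) % 2 = 1 by omega]; rfl
        have e4 : (q * r * s * γ' ^ 2 : ℤ) % 2 = 1 := by rw [Int.mul_emod, e3, e2]; rfl
        obtain ⟨n, hn⟩ : ∃ n, γ = 2 * n + 1 := ⟨γ / 2, by omega⟩
        have e5 : q * r * s * γ' ^ 2 = 2 * (n ^ 2 + n) := by
          push_cast at hPell; subst hn; linarith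
        omega
    obtain ⟨d, e, a, b, hde, hp, hm, hv⟩ := aux_odd hD hγ1 ho hg hPell
    have hv' : (-e : ℤ) * b ^ 2 - (-d : ℤ) * a ^ 2 = 1 := by rw [← hv]; ring
    have hn1 : legendreSym r 1 ≠ 0 := by rw [h1r]; norm_num
    have hdr : (r : ℤ) ∣ e → legendreSym r d = 1 := fun h => by rw [aux_leg r hv h hn1, h1r]
    have her : (r : ℤ) ∣ d → legendreSym r e = 1 := fun h => by
      rw [← aux_neg' r hr8, aux_leg r hv' (by simpa using h) hn1, h1r]
    have h8 : ∀ u v : ℤ, u % 4 = 3 → v % 8 = 5 → (2 * (u * v)) % 8 = 6 := by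
      intro u v hu hv
      have h4 : (u * v) % 4 = 3 := by
        rw [Int.mul_emod, hu, show v % 4 = 1 by omega]; rfl
      omega
    have h55 : (r * s : ℤ) % 8 = 1 := by rw [Int.mul_emod, hr8', hs8']; rfl
    have h6 : (2 * (q * (r * s)) : ℤ) % 8 = 6 := by
      have h4 : (q * (r * s) : ℤ) % 4 = 3 := by
        rw [Int.mul_emod, hq4', show (r * s : ℤ) % 4 = 1 by omega]; rfl
      omega
    rw [show 2 * q * r * s = 2 * (q * (r * (s * 1))) by ring] at hde
    rcases aux_peel Nat.prime_two hde with ⟨x, rfl, h4⟩ | ⟨x, rfl, h4⟩ <;>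
    rcases aux_peel hq h4 with ⟨y, rfl, khq⟩ | ⟨y, rfl, khq⟩ <;>
    rcases aux_peel hr khq with ⟨y, rfl, khr⟩ | ⟨y, rfl, khr⟩ <;>
    rcases aux_peel hs khr with ⟨z, rfl, kz⟩ | ⟨z, rfl, kz⟩ <;>
    obtain ⟨rfl, rfl⟩ := mul_eq_one.1 kz <;> push_cast at hp hm hv hdr her <;>
    simp only [mul_one] at hp hm hv hdr her
    · exact (aux_mod8 (Or.inl ⟨h6, rfl⟩) hv).elim
    · right; right
      exact ⟨2 * s * b, by rw [hm]; ring⟩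
    · right; left
      exact ⟨2 * r * b, by rw [hm]; ring⟩
    · exact (aux_mod8 (Or.inl ⟨by omega, h55⟩) hv).elim
    · have := her ⟨2 * s, by ring⟩
      rw [hqr] at this; norm_num at this
    · have := her ⟨2, by ring⟩
      rw [legendreSym.mul, hqr, hsr] at this; norm_num at this
    · have := hdr ⟨q, by ring⟩
      rw [legendreSym.mul, h2r, hsr] at this; norm_num at this
    · have := hdr ⟨q * s, by ring⟩
      rw [h2r] at this; norm_num at this
    · have := her ⟨q * s, by ring⟩
      rw [h2r] at this; norm_num at this
    · have := her ⟨q, by ring⟩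
      rw [legendreSym.mul, h2r, hsr] at this; norm_num at this
    · have := hdr ⟨2, by ring⟩
      rw [legendreSym.mul, hqr, hsr] at this; norm_num at this
    · have := hdr ⟨2 * s, by ring⟩
      rw [hqr] at this; norm_num at this
    · left
      exact ⟨2 * q * b, by rw [hm]; ring⟩
    · exact (aux_mod8 (Or.inr ⟨hr8', h8 _ _ hq4' hs8'⟩) hv).elim
    · exact (aux_mod8 (Or.inr ⟨hs8', h8 _ _ hq4' hr8'⟩) hv).elim
    · exfalso
      refine aux_min (a := a) (b := b) hγ1 hfund ?_ ?_
      · rw [hp]; ring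
      · rw [← hv]; push_cast; ring
  · rintro ⟨⟨t, ht⟩, ⟨u, hu⟩⟩
    refine aux_sq hr (e := 2 * q) (z := γ - 1) (w := t * u) ?_ hγm ?_
    · intro h
      rcases (Nat.prime_iff_prime_int.1 hr).dvd_or_dvd h with h | h
      · exact hnd hr Nat.prime_two (by rintro rfl; omega) h
      · exact hnd hr hq hqr'.symm h
    rw [mul_pow t, ← ht, ← hu]
    ring
  · rintro ⟨⟨t, ht⟩, ⟨u, hu⟩⟩
    refine aux_sq hs (e := 2 * q) (z := γ - 1) (w := t * u) ?_ hγm ?_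
    · intro h
      rcases (Nat.prime_iff_prime_int.1 hs).dvd_or_dvd h with h | h
      · exact hnd hs Nat.prime_two (by rintro rfl; omega) h
      · exact hnd hs hq hqs'.symm h
    rw [mul_pow t, ← ht, ← hu]
    ring
  · rintro ⟨⟨t, ht⟩, ⟨u, hu⟩⟩
    refine aux_sq hr (e := s) (z := 2 * (γ - 1)) (w := t * u) (hnd hr hs hne)
      (mul_ne_zero two_ne_zero hγm) ?_
    rw [mul_pow t, ← ht, ← hu]
    ring

theorem statement_5 (η q r s : ℕ) [Fact q.Prime] [Fact r.Prime] [Fact s.Prime]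
    (hη : η = 1 ∨ η = 2)
    (hq4 : q % 4 = 3) (hr8 : r % 8 = 5) (hs8 : s % 8 = 5)
    (hqr : legendreSym r q = (-1) ^ (if η = 2 then 1 else 0))
    (hqs : legendreSym s q = (-1) ^ (if η = 2 then 1 else 0))
    (hrs : legendreSym s r = 1)
    (γ γ' : ℤ) (hγ : 0 < γ) (hγ' : 0 < γ')
    (hPell : γ ^ 2 - (η * q * r * s : ℕ) * γ' ^ 2 = 1)
    (hfund : ∀ a b : ℤ, 0 < a → 0 < b → a ^ 2 - (η * q * r * s : ℕ) * b ^ 2 = 1 → γ ≤ a) :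
    let A : Prop := ∃ t : ℤ, 2 ^ (if η = 1 then 1 else 0) * (q : ℤ) * (γ - 1) = t ^ 2
    let B : Prop := ∃ t : ℤ, 2 * (r : ℤ) * (γ + (-1) ^ (if η = 2 then 1 else 0)) = t ^ 2
    let C : Prop := ∃ t : ℤ, 2 * (s : ℤ) * (γ + (-1) ^ (if η = 2 then 1 else 0)) = t ^ 2
    (A ∧ ¬B ∧ ¬C) ∨ (¬A ∧ B ∧ ¬C) ∨ (¬A ∧ ¬B ∧ C) := by
  rcases hη with rfl | rfl
  · have h := case_one q r s hq4 hr8 hs8 (by simpa using hqr) (by simpa using hqs) hrs γ γ' hγ hγ'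
      (by simpa using hPell) (by simpa using hfund)
    have hB : (-1 : ℤ) ^ (if (1 : ℕ) = 2 then 1 else 0) = 1 := by norm_num
    have hA : (2 : ℤ) ^ (if (1 : ℕ) = 1 then 1 else 0) = 2 := by norm_num
    rw [hA, hB]
    intro A B C
    change (A ∨ B ∨ C) ∧ ¬ (A ∧ B) ∧ ¬ (A ∧ C) ∧ ¬ (B ∧ C) at h
    clear_value A B C
    clear hfund
    tauto
  · have h := case_two q r s hq4 hr8 hs8 (by simpa using hqr) (by simpa using hqs) hrs γ γ' hγ hγ'
      hPell hfund
    have hB : (-1 : ℤ) ^ (if (2 : ℕ) = 2 then 1 else 0) = -1 := by norm_num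
    have hA : (2 : ℤ) ^ (if (2 : ℕ) = 1 then 1 else 0) = 1 := by norm_num
    rw [hA, hB, one_mul, ← sub_eq_add_neg]
    intro A B C
    change (A ∨ B ∨ C) ∧ ¬ (A ∧ B) ∧ ¬ (A ∧ C) ∧ ¬ (B ∧ C) at h
    clear_value A B C
    clear hfund
    tauto
end

section
/- Let η ∈ {1,2} and let q, r, s be primes with q ≡ 3 (mod 4), r ≡ s ≡ 5 (mod 8), Legendre symbols (q/r) = (q/s) = (−1)^{δ_{η,2}} and (r/s) = 1, and let (γ, γ′) be the fundamental solution of X² − ηqrs·Y² = 1. Then: (a) if 2^{δ_{η,1}}·q·(γ−1) is a perfect square, there exist integers γ₁, γ₂ with ηγ = q·γ₁² + ηrs·γ₂², ηγ′ = 2γ₁γ₂, and η = −q·γ₁² + ηrs·γ₂² (equivalently √(η·ε_{ηqrs}) = γ₁√q + γ₂√(ηrs)); (b) if 2r·(γ+(−1)^{δ_{η,2}}) is a perfect square, there exist integers γ₁, γ₂ with ηγ = ηr·γ₁² + qs·γ₂², ηγ′ = 2γ₁γ₂, and η = (−1)^{δ_{η,2}}·ηr·γ₁² + (−1)^{δ_{η,1}}·qs·γ₂²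 (equivalently √(η·ε_{ηqrs}) = γ₁√(ηr) + γ₂√(qs)); (c) if 2s·(γ+(−1)^{δ_{η,2}}) is a perfect square, there exist integers γ₁, γ₂ with ηγ = ηs·γ₁² + qr·γ₂², ηγ′ = 2γ₁γ₂, and η = (−1)^{δ_{η,2}}·ηs·γ₁² + (−1)^{δ_{η,1}}·qr·γ₂² (equivalently √(η·ε_{ηqrs}) = γ₁√(ηs) + γ₂√(qr)). -/
lemma sqf_div (N w m g : ℤ) (hN : Squarefree N) (hw : w ≠ 0) (h : w ^ 2 * m = N * g ^ 2) :
    ∃ v, g = w * v ∧ m = N * v ^ 2 := by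
  have hdvd : w ∣ g := by
    have hpos : 0 < Int.gcd w g := Int.gcd_pos_of_ne_zero_left _ hw
    obtain ⟨w', g', hc, hw', hg'⟩ := Int.exists_gcd_one hpos
    set d : ℤ := (Int.gcd w g : ℤ) with hd
    have hd0 : d ≠ 0 := by positivity
    have h1 : w' ^ 2 * m = N * g' ^ 2 := by
      have : d ^ 2 * (w' ^ 2 * m) = d ^ 2 * (N * g' ^ 2) := by
        rw [hw', hg'] at h
        linear_combination h
      exact mul_left_cancel₀ (pow_ne_zero 2 hd0) this
    have hco : IsCoprime w' g' := Int.isCoprime_iff_gcd_eq_one.mpr hc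
    have h2 : w' ^ 2 ∣ N := (hco.pow (m := 2) (n := 2)).dvd_of_dvd_mul_right ⟨m, h1.symm⟩
    have h3 : IsUnit w' := hN w' (by rw [← sq]; exact h2)
    rw [hw', hg']
    exact mul_dvd_mul_right (h3.dvd) d
  obtain ⟨v, rfl⟩ := hdvd
  refine ⟨v, rfl, mul_left_cancel₀ (pow_ne_zero 2 hw) ?_⟩
  linear_combination h

lemma prime_sqr (p x t : ℤ) (hp : Prime p) (h : p * x = t ^ 2) : ∃ u, t = p * u ∧ x = p * u ^ 2 := by
  obtain ⟨u, rfl⟩ := hp.dvd_of_dvd_pow (⟨x, h.symm⟩ : p ∣ t ^ 2)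
  exact ⟨u, rfl, mul_left_cancel₀ hp.ne_zero (by linear_combination h)⟩

lemma two_prime_sqr (p x t : ℤ) (hp : Prime p) (h2 : p % 2 = 1) (h : 2 * p * x = t ^ 2) :
    ∃ u, x = 2 * p * u ^ 2 := by
  obtain ⟨u, rfl, hu⟩ := prime_sqr p (2 * x) t hp (by linear_combination h)
  have : Even (p * u ^ 2) := ⟨x, by omega⟩
  have hu2 : Even u := by
    rcases Int.even_mul.mp this with h | h
    · rw [Int.even_iff] at h; omega
    · exact (Int.even_pow.mp h).1
  obtain ⟨v, rfl⟩ := hu2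
  exact ⟨v, by linarith⟩

lemma sqf_mul (p l : ℕ) (hp : p.Prime) (hl : l.Prime) (h : p ≠ l) :
    Squarefree ((p : ℤ) * l) := by
  have : Squarefree (p * l) :=
    (Nat.squarefree_mul ((Nat.coprime_primes hp hl).mpr h)).mpr
      ⟨hp.prime.squarefree, hl.prime.squarefree⟩
  exact_mod_cast Int.squarefree_natCast.mpr this

lemma sqf_two_mul (p l : ℕ) (hp : p.Prime) (hl : l.Prime) (h : p ≠ l) (h1 : p % 2 = 1)
    (h2 : l % 2 = 1) : Squarefree (2 * ((p : ℤ) * l)) := by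
  have hs : Squarefree (p * l) :=
    (Nat.squarefree_mul ((Nat.coprime_primes hp hl).mpr h)).mpr
      ⟨hp.prime.squarefree, hl.prime.squarefree⟩
  have : Squarefree (2 * (p * l)) := by
    refine (Nat.squarefree_mul ?_).mpr ⟨Nat.prime_two.prime.squarefree, hs⟩
    rw [Nat.coprime_two_left]
    exact (Nat.odd_iff.mpr h1).mul (Nat.odd_iff.mpr h2)
  exact_mod_cast Int.squarefree_natCast.mpr this

/-- Case (b), for both values of η. -/
lemma case_b (η q r s : ℕ) (hq : q.Prime) (hr : r.Prime) (hs : s.Prime)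
    (hη : η = 1 ∨ η = 2) (hq4 : q % 4 = 3) (hr8 : r % 8 = 5) (hs8 : s % 8 = 5)
    (γ γ' : ℤ) (hγ : 0 < γ) (hγ' : 0 < γ')
    (hPell : γ ^ 2 - (η * q * r * s : ℕ) * γ' ^ 2 = 1)
    (ht : ∃ t : ℤ, 2 * (r : ℤ) * (γ + (-1) ^ (if η = 2 then 1 else 0)) = t ^ 2) :
      ∃ γ₁ γ₂ : ℤ,
        (η : ℤ) * γ = (η : ℤ) * r * γ₁ ^ 2 + (q : ℤ) * s * γ₂ ^ 2 ∧
        (η : ℤ) * γ' = 2 * γ₁ * γ₂ ∧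
        (η : ℤ) = (-1) ^ (if η = 2 then 1 else 0) * (η : ℤ) * r * γ₁ ^ 2 +
          (-1) ^ (if η = 1 then 1 else 0) * (q : ℤ) * s * γ₂ ^ 2 := by
  have hr0 : (r : ℤ) ≠ 0 := by exact_mod_cast hr.ne_zero
  have hq0 : 0 < (q : ℤ) := by exact_mod_cast hq.pos
  have hs0 : 0 < (s : ℤ) := by exact_mod_cast hs.pos
  have hr1 : 0 < (r : ℤ) := by exact_mod_cast hr.pos
  have hD : 0 < (q : ℤ) * r * s * γ' ^ 2 := by positivity
  obtain ⟨t, ht⟩ := ht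
  obtain ⟨u, hu⟩ := two_prime_sqr r _ t (Nat.prime_iff_prime_int.mp hr) (by omega) ht
  have hqs : q ≠ s := by rintro rfl; omega
  rcases hη with rfl | rfl
  · norm_num at hu hPell ⊢
    have hg : γ = 2 * r * u ^ 2 - 1 := by linarith
    have hu0 : u ≠ 0 := by rintro rfl; simp at hg; omega
    subst hg
    obtain ⟨v, hv, hm⟩ := sqf_div (q * s) (2 * u) (r * u ^ 2 - 1) γ' (sqf_mul q s hq hs hqs)
      (by simpa using hu0) (mul_left_cancel₀ hr0 (by linear_combination hPell))
    exact ⟨u, v, by linear_combination hm, hv, by linear_combination -hm⟩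
  · norm_num at hu hPell ⊢
    have hg : γ = 2 * r * u ^ 2 + 1 := by linarith
    have hu0 : u ≠ 0 := by rintro rfl; simp at hg; subst hg; nlinarith
    subst hg
    obtain ⟨v, hv, hm⟩ := sqf_div (2 * (q * s)) (2 * u) (r * u ^ 2 + 1) γ'
      (sqf_two_mul q s hq hs hqs (by omega) (by omega))
      (by simpa using hu0) (mul_left_cancel₀ hr0 (by linear_combination hPell))
    exact ⟨u, 2 * v, by linear_combination 2 * hm, by linear_combination 2 * hv,
      by linear_combination 2 * hm⟩

lemma case_a (η q r s : ℕ) (hq : q.Prime) (hr : r.Prime) (hs : s.Prime)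
    (hη : η = 1 ∨ η = 2) (hq4 : q % 4 = 3) (hr8 : r % 8 = 5) (hs8 : s % 8 = 5) (hrs : r ≠ s)
    (γ γ' : ℤ) (hγ' : 0 < γ')
    (hPell : γ ^ 2 - (η * q * r * s : ℕ) * γ' ^ 2 = 1)
    (ht : ∃ t : ℤ, 2 ^ (if η = 1 then 1 else 0) * (q : ℤ) * (γ - 1) = t ^ 2) :
      ∃ γ₁ γ₂ : ℤ,
        (η : ℤ) * γ = q * γ₁ ^ 2 + (η : ℤ) * r * s * γ₂ ^ 2 ∧
        (η : ℤ) * γ' = 2 * γ₁ * γ₂ ∧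
        (η : ℤ) = -(q : ℤ) * γ₁ ^ 2 + (η : ℤ) * r * s * γ₂ ^ 2 := by
  have hq0 : 0 < (q : ℤ) := by exact_mod_cast hq.pos
  have hs0 : 0 < (s : ℤ) := by exact_mod_cast hs.pos
  have hr1 : 0 < (r : ℤ) := by exact_mod_cast hr.pos
  have hD : 0 < (q : ℤ) * r * s * γ' ^ 2 := by positivity
  obtain ⟨t, ht⟩ := ht
  rcases hη with rfl | rfl
  · norm_num at ht hPell ⊢
    obtain ⟨u, hu⟩ := two_prime_sqr q _ t (Nat.prime_iff_prime_int.mp hq) (by omega) ht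
    have hg : γ = 2 * q * u ^ 2 + 1 := by linarith
    have hu0 : u ≠ 0 := by rintro rfl; simp at hg; subst hg; nlinarith
    subst hg
    obtain ⟨v, hv, hm⟩ := sqf_div (r * s) (2 * u) (q * u ^ 2 + 1) γ' (sqf_mul r s hr hs hrs)
      (by simpa using hu0) (mul_left_cancel₀ hq0.ne' (by linear_combination hPell))
    exact ⟨u, v, by linear_combination hm, hv, by linear_combination hm⟩
  · norm_num at ht hPell ⊢
    obtain ⟨u, -, hu⟩ := prime_sqr q _ t (Nat.prime_iff_prime_int.mp hq) ht
    have hg : γ = q * u ^ 2 + 1 := by linarith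
    have hu0 : u ≠ 0 := by rintro rfl; simp at hg; subst hg; nlinarith
    subst hg
    obtain ⟨v, hv, hm⟩ := sqf_div (2 * (r * s)) u (q * u ^ 2 + 2) γ'
      (sqf_two_mul r s hr hs hrs (by omega) (by omega))
      hu0 (mul_left_cancel₀ hq0.ne' (by linear_combination hPell))
    exact ⟨u, v, by linear_combination hm, by linear_combination 2 * hv,
      by linear_combination hm⟩


theorem statement_6 (η q r s : ℕ) [Fact q.Prime] [Fact r.Prime] [Fact s.Prime]
    (hη : η = 1 ∨ η = 2)
    (hq4 : q % 4 = 3) (hr8 : r % 8 = 5) (hs8 : s % 8 = 5)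
    (hqr : legendreSym r q = (-1) ^ (if η = 2 then 1 else 0))
    (hqs : legendreSym s q = (-1) ^ (if η = 2 then 1 else 0))
    (hrs : legendreSym s r = 1)
    (γ γ' : ℤ) (hγ : 0 < γ) (hγ' : 0 < γ')
    (hPell : γ ^ 2 - (η * q * r * s : ℕ) * γ' ^ 2 = 1)
    (hfund : ∀ a b : ℤ, 0 < a → 0 < b → a ^ 2 - (η * q * r * s : ℕ) * b ^ 2 = 1 → γ ≤ a) :
    ((∃ t : ℤ, 2 ^ (if η = 1 then 1 else 0) * (q : ℤ) * (γ - 1) = t ^ 2) →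
      ∃ γ₁ γ₂ : ℤ,
        (η : ℤ) * γ = q * γ₁ ^ 2 + (η : ℤ) * r * s * γ₂ ^ 2 ∧
        (η : ℤ) * γ' = 2 * γ₁ * γ₂ ∧
        (η : ℤ) = -(q : ℤ) * γ₁ ^ 2 + (η : ℤ) * r * s * γ₂ ^ 2) ∧
    ((∃ t : ℤ, 2 * (r : ℤ) * (γ + (-1) ^ (if η = 2 then 1 else 0)) = t ^ 2) →
      ∃ γ₁ γ₂ : ℤ,
        (η : ℤ) * γ = (η : ℤ) * r * γ₁ ^ 2 + (q : ℤ) * s * γ₂ ^ 2 ∧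
        (η : ℤ) * γ' = 2 * γ₁ * γ₂ ∧
        (η : ℤ) = (-1) ^ (if η = 2 then 1 else 0) * (η : ℤ) * r * γ₁ ^ 2 +
          (-1) ^ (if η = 1 then 1 else 0) * (q : ℤ) * s * γ₂ ^ 2) ∧
    ((∃ t : ℤ, 2 * (s : ℤ) * (γ + (-1) ^ (if η = 2 then 1 else 0)) = t ^ 2) →
      ∃ γ₁ γ₂ : ℤ,
        (η : ℤ) * γ = (η : ℤ) * s * γ₁ ^ 2 + (q : ℤ) * r * γ₂ ^ 2 ∧
        (η : ℤ) * γ' = 2 * γ₁ * γ₂ ∧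
        (η : ℤ) = (-1) ^ (if η = 2 then 1 else 0) * (η : ℤ) * s * γ₁ ^ 2 +
          (-1) ^ (if η = 1 then 1 else 0) * (q : ℤ) * r * γ₂ ^ 2) := by

  have hq := Fact.out (p := q.Prime)
  have hr := Fact.out (p := r.Prime)
  have hs := Fact.out (p := s.Prime)
  have hne : r ≠ s := by
    rintro rfl
    have h0 : legendreSym r (r : ℤ) = 0 := by
      rw [legendreSym.eq_zero_iff]; simp
    rw [h0] at hrs
    exact zero_ne_one hrs
  refine ⟨case_a η q r s hq hr hs hη hq4 hr8 hs8 hne γ γ' hγ' hPell,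
    case_b η q r s hq hr hs hη hq4 hr8 hs8 γ γ' hγ hγ' hPell,
    case_b η q s r hq hs hr hη hq4 hs8 hr8 γ γ' hγ hγ' ?_⟩
  rw [show η * q * s * r = η * q * r * s by ring]
  exact hPell
end

section
/- Let q, r, s be prime numbers with q ≡ 3 (mod 4), r ≡ s ≡ 5 (mod 8), and Legendre symbols (q/r) = (q/s) = 1. Then there do not exist integers γ, γ₁, γ₂ satisfying γ + 1 = 2q·γ₁² and γ − 1 = 2rs·γ₂². -/
theorem statement_14 (q r s : ℕ) [Fact q.Prime] [Fact r.Prime] [Fact s.Prime]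
    (hq4 : q % 4 = 3) (hr8 : r % 8 = 5) (hs8 : s % 8 = 5)
    (hqr : legendreSym r q = 1) (hqs : legendreSym s q = 1) :
    ¬ ∃ γ γ₁ γ₂ : ℤ, γ + 1 = 2 * (q : ℤ) * γ₁ ^ 2 ∧ γ - 1 = 2 * (r : ℤ) * s * γ₂ ^ 2 := by
  rintro ⟨γ, x, y, h1, h2⟩
  have hq2 : q ≠ 2 := by omega
  have key : ∀ (p : ℕ) [Fact p.Prime], p % 8 = 5 → legendreSym p q = 1 →
      IsSquare (p : ZMod q) := by
    intro p _ hp h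
    rw [← legendreSym.quadratic_reciprocity_one_mod_four (by omega) hq2] at h
    by_contra hn
    rw [(legendreSym.eq_neg_one_iff' q).mpr hn] at h
    norm_num at h
  obtain ⟨a, ha⟩ := key r hr8 hqr
  obtain ⟨b, hb⟩ := key s hs8 hqs
  have h3 : (q : ℤ) * x ^ 2 - r * s * y ^ 2 = 1 := by linarith
  have h4 := congrArg (Int.cast : ℤ → ZMod q) h3
  push_cast at h4
  rw [ha, hb, CharP.cast_eq_zero] at h4
  have h5 : (a * b * (y : ZMod q)) ^ 2 = -1 := by linear_combination -h4
  exact ZMod.mod_four_ne_three_of_sq_eq_neg_one h5 hq4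
end

section
/- Let q, r, s be prime numbers with q ≡ 3 (mod 4), r ≡ s ≡ 5 (mod 8), and Legendre symbol (q/s) = 1. Then for each e ∈ {1, −1}, there do not exist integers γ, γ₁, γ₂ satisfying γ + e = q·γ₁² and γ − e = rs·γ₂². -/
theorem statement_15 (q r s : ℕ) [Fact q.Prime] [Fact r.Prime] [Fact s.Prime]
    (hq4 : q % 4 = 3) (hr8 : r % 8 = 5) (hs8 : s % 8 = 5)
    (hqs : legendreSym s q = 1) :
    ∀ e : ℤ, e = 1 ∨ e = -1 →
      ¬ ∃ γ γ₁ γ₂ : ℤ, γ + e = (q : ℤ) * γ₁ ^ 2 ∧ γ - e = (r : ℤ) * s * γ₂ ^ 2 := by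
  rintro e he ⟨g, a, b, h1, h2⟩
  have hq0 : ((q : ℤ) : ZMod s) ≠ 0 := by
    intro h
    rw [(legendreSym.eq_zero_iff s q).2 h] at hqs
    exact zero_ne_one hqs
  obtain ⟨x, hx⟩ := (legendreSym.eq_one_iff s hq0).1 hqs
  have hneg : IsSquare (-1 : ZMod s) := ZMod.exists_sq_eq_neg_one_iff.2 (by omega)
  obtain ⟨i, hi⟩ := hneg
  have h2n : ¬ IsSquare (2 : ZMod s) := by
    rw [ZMod.exists_sq_eq_two_iff (by omega)]
    omega
  have h3 : (2 * e : ℤ) = q * a ^ 2 - r * s * b ^ 2 := by linarith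
  have h4 := congrArg (Int.cast : ℤ → ZMod s) h3
  push_cast at h4 hx
  rw [ZMod.natCast_self, hx] at h4
  apply h2n
  rcases he with rfl | rfl
  · refine ⟨x * a, ?_⟩
    push_cast at h4
    linear_combination h4
  · refine ⟨i * x * a, ?_⟩
    push_cast at h4
    linear_combination (-1) * h4 + x ^ 2 * a ^ 2 * hi
end
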